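/- Let f ∈ L¹([−π,π]) be real-valued and even, and suppose that ess inf_{[0,π]} f > −∞ or ess sup_{[0,π]} f < ∞. Then for every n there exist a real unitary n×n matrix V_n and orderings λ_1(T_n(f)),…,λ_n(T_n(f)) and λ_1(H_n(f)),…,λ_n(H_n(f)) of the eigenvalues of T_n(f) and H_n(f) such that: Y_n = V_n Δ_n V_nᵀ with Δ_n = diag_{i=1,…,n}((−1)^{i+1}); T_n(f) = V_n D_n V_nᵀ with D_n = diag_{i=1,…,n}(λ_i(T_n(f))); H_n(f) = V_n Δ_n D_n V_nᵀ; λ_i(H_n(f)) = (−1)^{i+1} λ_i(T_n(f)) for i = 1,…,n; and moreover the sequence of multisets Λ_n⁺ = {λ_{2i−1}(T_n(f)) : i = 1,…,⌈n/2⌉} satisfies {Λ_n⁺} ∼ f, while the sequence Λ_n⁻ = {−λ_{2i}(T_n(f)) : i = 1,…,⌊n/2⌋} satisfies {Λ_n⁻} ∼ −f. -/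

import Mathlib

/-!
Since `f` is real and even, `T_n(f)` is symmetric Toeplitz, hence commutes with the flip `Y_n`. So
both are diagonalized by one orthogonal matrix `V`, and as the trace of `Y_n` is `0` or `1` the
columns can be ordered so that the eigenvalues of `Y_n` are `1, -1, 1, …`. The identities for
`H_n(f) = Y_n T_n(f)` follow at once; the content is the distribution of each parity class.

Let `ν` be normalized Lebesgue measure on `(-π, π]` and `w_i(x) = |∑ₖ V k i e^{ikx}|²`, a
probability density for `ν`. Then `λ_i = ∫ f w_i dν`, `∑ w_i = n`, and
`∑ (-1)^i w_i(x) = ∑ₖ cos((2k+1-n)x)`.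

*Square-integrable even symbols `g`.* The variances of `g` under the `w_i` sum up to
`n ∫ g² dν - ‖T_n(g)‖²` (Frobenius norm), which is `o(n)` by Parseval's identity and Cesàro
summation. So for Lipschitz `φ` the value `φ(λ_i)` may be replaced on average by `∫ φ(g) w_i dν`.
The sum of these integrals over one parity class is `n/2 ∫ φ(g) dν` plus or minus half a sum of `n`
distinct Fourier coefficients of `φ ∘ g`, which is `o(n)` since they are square-summable.

*Integrable symbols.* For convex Lipschitz `φ`, the sums of `φ(λ_i)` over a parity class for two
symbols `f` and `g` differ by at most `K n ‖f - g‖₁`: the squared entries of the transition matrix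
`Vᵀ U` between the two eigenbases are doubly stochastic and link only indices of the same parity, so
that Jensen's inequality applies. Truncating `f` reduces convex Lipschitz test functions to the
square-integrable case, and differences of convex Lipschitz functions are uniformly dense in the
continuous functions of compact support.
-/

open MeasureTheory Matrix Filter

/-- The `k`-th Fourier coefficient of `f : ℝ → ℂ` on `[-π, π]`. -/
noncomputable def fourierCoef (f : ℝ → ℂ) (k : ℤ) : ℂ :=
  (1 / (2 * Real.pi)) * ∫ x in (-Real.pi)..Real.pi, f x * Complex.exp (-Complex.I * k * x)

/-- The `n × n` Toeplitz matrix generated by `f` (for real generating functions we take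
the real parts of the Fourier coefficients, which are then real). -/
noncomputable def toeplitzR (f : ℝ → ℂ) (n : ℕ) : Matrix (Fin n) (Fin n) ℝ :=
  Matrix.of fun i j => (fourierCoef f ((i : ℤ) - (j : ℤ))).re

/-- The `n × n` exchange (flip) matrix `Y_n`. -/
def flipM (n : ℕ) : Matrix (Fin n) (Fin n) ℝ :=
  Matrix.of fun i j => if (i : ℕ) + (j : ℕ) = n - 1 then 1 else 0

/-- Essential range of a real-valued function on a set. -/
def essRangeR (f : ℝ → ℝ) (s : Set ℝ) : Set ℝ :=
  {z : ℝ | ∀ ε > 0, 0 < volume {x ∈ s | |f x - z| < ε}}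

section OrthogonalDiagonalization

variable {𝕜 E ι : Type*} [RCLike 𝕜] [Fintype ι]

lemma exists_orthonormalBasis_eigenvectors_of_commute [NormedAddCommGroup E]
    [InnerProductSpace 𝕜 E] [FiniteDimensional 𝕜 E] {A B : E →ₗ[𝕜] E}
    (hA : A.IsSymmetric) (hB : B.IsSymmetric) (hAB : Commute A B)
    (hι : Module.finrank 𝕜 E = Fintype.card ι) :
    ∃ (u : OrthonormalBasis ι 𝕜 E) (a b : ι → 𝕜),
      ∀ i, A (u i) = a i • u i ∧ B (u i) = b i • u i := by
  classical
  let W (μ : 𝕜 × 𝕜) : Submodule 𝕜 E :=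
    Module.End.eigenspace A μ.2 ⊓ Module.End.eigenspace B μ.1
  have hW : DirectSum.IsInternal W := hA.directSum_isInternal_of_commute hB hAB
  have hWo : OrthogonalFamily 𝕜 (fun μ => W μ) fun μ => (W μ).subtypeₗᵢ :=
    hA.orthogonalFamily_eigenspace_inf_eigenspace hB
  have : Fintype {μ // W μ ≠ ⊥} :=
    (WellFoundedGT.finite_ne_bot_of_iSupIndep hW.submodule_iSupIndep).fintype
  have hW' : DirectSum.IsInternal fun μ : {μ // W μ ≠ ⊥} => W μ :=
    DirectSum.isInternal_ne_bot_iff.2 hW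
  have hWo' := hWo.comp (Subtype.val_injective (p := fun μ => W μ ≠ ⊥))
  let e := Fintype.equivFin ι
  let eigenvalues (i : ι) : {μ // W μ ≠ ⊥} := hW'.subordinateOrthonormalBasisIndex hι (e i) hWo'
  refine ⟨(hW'.subordinateOrthonormalBasis hι hWo').reindex e.symm, fun i => (eigenvalues i).1.2,
    fun i => (eigenvalues i).1.1, fun i => ?_⟩
  have hi := hW'.subordinateOrthonormalBasis_subordinate hι (e i) hWo'
  rw [OrthonormalBasis.reindex_apply]
  exact ⟨Module.End.mem_eigenspace_iff.1 hi.1, Module.End.mem_eigenspace_iff.1 hi.2⟩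

variable [DecidableEq ι]

lemma exists_unitary_diagonal_of_commute {A B : Matrix ι ι 𝕜} (hA : A.IsHermitian)
    (hB : B.IsHermitian) (hAB : Commute A B) :
    ∃ (U : Matrix ι ι 𝕜) (a b : ι → 𝕜), U * Uᴴ = 1 ∧
      A = U * diagonal a * Uᴴ ∧ B = U * diagonal b * Uᴴ := by
  have hcomm : Commute (toEuclideanLin A) (toEuclideanLin B) := hAB.map (toLpLinAlgEquiv (R := 𝕜) 2)
  obtain ⟨u, a, b, hu⟩ := exists_orthonormalBasis_eigenvectors_of_commute (ι := ι)
    (isSymmetric_toEuclideanLin_iff.2 hA) (isSymmetric_toEuclideanLin_iff.2 hB) hcomm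
    finrank_euclideanSpace
  let U : Matrix ι ι 𝕜 := (EuclideanSpace.basisFun ι 𝕜).toBasis.toMatrix u.toBasis
  have hU : U * Uᴴ = 1 :=
    (EuclideanSpace.basisFun ι 𝕜).toMatrix_orthonormalBasis_self_mul_conjTranspose u
  have eq_of_eigenvectors {M : Matrix ι ι 𝕜} {d : ι → 𝕜}
      (hM : ∀ i, toEuclideanLin M (u i) = d i • u i) : M = U * diagonal d * Uᴴ := by
    have hMU : M * U = U * diagonal d := by
      ext k i
      rw [mul_diagonal]
      simpa [U, mul_comm, Matrix.mul_apply, mulVec, dotProduct, Module.Basis.toMatrix_apply]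
        using congr($(hM i) k)
    rw [← hMU, Matrix.mul_assoc, hU, Matrix.mul_one]
  exact ⟨U, a, b, hU, eq_of_eigenvectors fun i => (hu i).1, eq_of_eigenvectors fun i => (hu i).2⟩

end OrthogonalDiagonalization

section FlipDiagonalization

lemma submatrix_mul_diagonal_mul_transpose {ι R : Type*} [Fintype ι] [DecidableEq ι]
    [CommSemiring R] (U : Matrix ι ι R) (d : ι → R) (e : Equiv.Perm ι) :
    U.submatrix id e * diagonal (d ∘ e) * (U.submatrix id e)ᵀ = U * diagonal d * Uᵀ := by
  rw [← submatrix_diagonal_equiv d e, submatrix_mul_equiv, transpose_submatrix,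
    submatrix_mul_equiv, submatrix_id_id]

lemma exists_perm_of_sum_signs_eq {ι : Type*} [Fintype ι] {s t : ι → ℝ}
    (hs : ∀ i, s i = 1 ∨ s i = -1) (ht : ∀ i, t i = 1 ∨ t i = -1) (h : ∑ i, s i = ∑ i, t i) :
    ∃ e : Equiv.Perm ι, s ∘ e = t := by
  classical
  have sum_signs {u : ι → ℝ} (hu : ∀ i, u i = 1 ∨ u i = -1) :
      ∑ i, u i = 2 * (Fintype.card {i // u i = 1} : ℝ) - Fintype.card ι := by
    have hui (i : ι) : u i = 2 * (if u i = 1 then 1 else 0) - 1 := by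
      rcases hu i with hi | hi <;> norm_num [hi]
    rw [Finset.sum_congr rfl fun i _ => hui i, Finset.sum_sub_distrib, ← Finset.mul_sum,
      Finset.sum_boole, Fintype.card_subtype, Finset.sum_const, Finset.card_univ, nsmul_one]
  have hcard : (Fintype.card {i // t i = 1} : ℝ) = Fintype.card {i // s i = 1} := by
    linarith [sum_signs hs, sum_signs ht]
  let e : {i // t i = 1} ≃ {i // s i = 1} := Fintype.equivOfCardEq (by exact_mod_cast hcard)
  refine ⟨e.extendSubtype, funext fun i => ?_⟩
  rcases ht i with hi | hi
  · exact (e.extendSubtype_mem i hi).trans hi.symm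
  · have hne : t i ≠ 1 := by norm_num [hi]
    exact ((hs _).resolve_left (e.extendSubtype_not_mem i hne)).trans hi.symm

variable {n : ℕ}

lemma flipM_apply (i j : Fin n) : flipM n i j = if Fin.rev i = j then 1 else 0 := by
  have : (i : ℕ) + j = n - 1 ↔ Fin.rev i = j := by
    rw [Fin.ext_iff, Fin.val_rev]
    omega
  simp [flipM, this]

lemma flipM_transpose (n : ℕ) : (flipM n)ᵀ = flipM n := by
  ext i j
  simp only [transpose_apply, flipM, of_apply, add_comm]

lemma flipM_mul_apply (A : Matrix (Fin n) (Fin n) ℝ) (i j : Fin n) :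
    (flipM n * A) i j = A (Fin.rev i) j := by
  simp [Matrix.mul_apply, flipM_apply]

lemma mul_flipM_apply (A : Matrix (Fin n) (Fin n) ℝ) (i j : Fin n) :
    (A * flipM n) i j = A i (Fin.rev j) := by
  simp [Matrix.mul_apply, flipM_apply, Fin.rev_eq_iff]

lemma flipM_mul_self (n : ℕ) : flipM n * flipM n = 1 := by
  ext i j
  rw [flipM_mul_apply, flipM_apply, Fin.rev_rev, one_apply]

lemma trace_flipM (n : ℕ) : (flipM n).trace = ∑ i : Fin n, (-1 : ℝ) ^ (i : ℕ) := by
  have hdiag (i : Fin n) : flipM n i i = if (i : ℕ) = n / 2 ∧ Odd n then 1 else 0 := by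
    have : (i : ℕ) + i = n - 1 ↔ (i : ℕ) = n / 2 ∧ Odd n := by
      rw [Nat.odd_iff]
      omega
    simp [flipM, this]
  rw [Fin.sum_univ_eq_sum_range fun i => (-1 : ℝ) ^ i, neg_one_geom_sum, Matrix.trace]
  simp only [diag_apply, hdiag]
  rw [Fin.sum_univ_eq_sum_range fun i => if i = n / 2 ∧ Odd n then (1 : ℝ) else 0]
  rcases Nat.even_or_odd n with hn | hn
  · simp [hn]
  · have hmid : n / 2 < n := Nat.div_lt_self hn.pos one_lt_two
    simp [hn, Nat.not_even_iff_odd.2 hn, hmid]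

lemma exists_diagonalization_flipM {T : Matrix (Fin n) (Fin n) ℝ} (hT : Tᵀ = T)
    (hcomm : flipM n * T = T * flipM n) :
    ∃ (V : Matrix (Fin n) (Fin n) ℝ) (lam : Fin n → ℝ), V * Vᵀ = 1 ∧
      flipM n = V * diagonal (fun i : Fin n => (-1 : ℝ) ^ (i : ℕ)) * Vᵀ ∧
      T = V * diagonal lam * Vᵀ := by
  obtain ⟨U, s, a, hU, hY, hTU⟩ := exists_unitary_diagonal_of_commute
    ((conjTranspose_eq_transpose_of_trivial _).trans (flipM_transpose n))
    ((conjTranspose_eq_transpose_of_trivial _).trans hT) hcomm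
  rw [conjTranspose_eq_transpose_of_trivial] at hU hY hTU
  have hU' : Uᵀ * U = 1 := mul_eq_one_comm.1 hU
  have hs : diagonal s * diagonal s = 1 := calc
    diagonal s * diagonal s = Uᵀ * (U * diagonal s * Uᵀ) * (U * diagonal s * Uᵀ) * U := by
      simp only [Matrix.mul_assoc, hU', ← Matrix.mul_assoc Uᵀ, Matrix.one_mul, Matrix.mul_one]
    _ = 1 := by rw [← hY, Matrix.mul_assoc Uᵀ, flipM_mul_self, Matrix.mul_one, hU']
  have hs_sign (i : Fin n) : s i = 1 ∨ s i = -1 := by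
    simpa [mul_self_eq_one_iff] using congr($hs i i)
  have hsum : ∑ i, s i = ∑ i : Fin n, (-1 : ℝ) ^ (i : ℕ) := by
    rw [← trace_flipM, hY, trace_mul_comm, ← Matrix.mul_assoc, hU', Matrix.one_mul, trace_diagonal]
  obtain ⟨e, he⟩ := exists_perm_of_sum_signs_eq hs_sign (fun i => neg_one_pow_eq_or ℝ i) hsum
  refine ⟨U.submatrix id e, a ∘ e, ?_, ?_, ?_⟩
  · rw [transpose_submatrix, submatrix_mul_equiv, hU, submatrix_id_id]
  · rw [← he, submatrix_mul_diagonal_mul_transpose, ← hY]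
  · rw [submatrix_mul_diagonal_mul_transpose, ← hTU]

end FlipDiagonalization

section OrthogonalConjugation

variable {ι : Type*} [Fintype ι] [DecidableEq ι] {U V : Matrix ι ι ℝ}

lemma sum_sq_mul_diagonal_mul_transpose (hV : V * Vᵀ = 1) (d : ι → ℝ) :
    ∑ i, ∑ j, (V * diagonal d * Vᵀ) i j ^ 2 = ∑ i, d i ^ 2 := by
  have hV' : Vᵀ * V = 1 := mul_eq_one_comm.1 hV
  calc ∑ i, ∑ j, (V * diagonal d * Vᵀ) i j ^ 2
      = ((V * diagonal d * Vᵀ) * (V * diagonal d * Vᵀ)ᵀ).trace := by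
        simp only [Matrix.trace, diag_apply, Matrix.mul_apply (M := V * diagonal d * Vᵀ),
          transpose_apply, sq]
    _ = (V * (diagonal d * diagonal d) * Vᵀ).trace := by
        simp only [transpose_mul, transpose_transpose, diagonal_transpose, Matrix.mul_assoc,
          ← Matrix.mul_assoc Vᵀ, hV', Matrix.one_mul]
    _ = ∑ i, d i ^ 2 := by
        rw [trace_mul_comm, ← Matrix.mul_assoc, hV', Matrix.one_mul, diagonal_mul_diagonal,
          trace_diagonal]
        simp only [sq]

lemma sum_sq_apply_left_eq_one (hV : V * Vᵀ = 1) (i : ι) : ∑ j, V i j ^ 2 = 1 := by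
  simpa only [Matrix.mul_apply, transpose_apply, sq, one_apply_eq] using congr($hV i i)

lemma sum_sq_apply_right_eq_one (hV : V * Vᵀ = 1) (j : ι) : ∑ i, V i j ^ 2 = 1 :=
  sum_sq_apply_left_eq_one (V := Vᵀ) (mul_eq_one_comm.1 hV) j

lemma diag_conj_eq_sum_sq_mul (U V : Matrix ι ι ℝ) (d : ι → ℝ) (j : ι) :
    (Uᵀ * (V * diagonal d * Vᵀ) * U) j j = ∑ i, (Vᵀ * U) i j ^ 2 * d i := by
  have : Uᵀ * (V * diagonal d * Vᵀ) * U = (Vᵀ * U)ᵀ * (diagonal d * (Vᵀ * U)) := by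
    simp only [transpose_mul, transpose_transpose, Matrix.mul_assoc]
  simp only [this, Matrix.mul_apply (M := (Vᵀ * U)ᵀ), transpose_apply, diagonal_mul]
  exact Finset.sum_congr rfl fun i _ => by ring

lemma weight_mul_sq_apply_eq (hV : V * Vᵀ = 1) (hU : U * Uᵀ = 1) {c : ι → ℝ}
    (hc : V * diagonal c * Vᵀ = U * diagonal c * Uᵀ) (i j : ι) :
    c j * (Vᵀ * U) i j ^ 2 = c i * (Vᵀ * U) i j ^ 2 := by
  have hV' : Vᵀ * V = 1 := mul_eq_one_comm.1 hV
  have hU' : Uᵀ * U = 1 := mul_eq_one_comm.1 hU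
  have hcP : diagonal c * (Vᵀ * U) = Vᵀ * U * diagonal c := calc
    diagonal c * (Vᵀ * U) = Vᵀ * (V * diagonal c * Vᵀ) * U := by
      simp only [Matrix.mul_assoc, ← Matrix.mul_assoc Vᵀ V, hV', Matrix.one_mul]
    _ = Vᵀ * U * diagonal c := by
      simp only [hc, Matrix.mul_assoc, hU', Matrix.mul_one]
  have hij : c i * (Vᵀ * U) i j = (Vᵀ * U) i j * c j := by
    simpa only [diagonal_mul, mul_diagonal] using congr($hcP i j)
  linear_combination -(Vᵀ * U) i j * hij

/- A weighted form of Peierls' inequality. The squared entries of `Vᵀ * U` form a doubly stochastic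
matrix, and the hypothesis `hc` says that they link only indices of equal weight. -/
lemma sum_weight_mul_convex_diag_le (hV : V * Vᵀ = 1) (hU : U * Uᵀ = 1) {c : ι → ℝ}
    (hc0 : ∀ i, 0 ≤ c i) (hc : V * diagonal c * Vᵀ = U * diagonal c * Uᵀ) {φ : ℝ → ℝ}
    (hφ : ConvexOn ℝ Set.univ φ) (d : ι → ℝ) :
    ∑ j, c j * φ ((Uᵀ * (V * diagonal d * Vᵀ) * U) j j) ≤ ∑ i, c i * φ (d i) := by
  have hP : (Vᵀ * U) * (Vᵀ * U)ᵀ = 1 := by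
    rw [transpose_mul, transpose_transpose, Matrix.mul_assoc, ← Matrix.mul_assoc U, hU,
      Matrix.one_mul, mul_eq_one_comm.1 hV]
  calc ∑ j, c j * φ ((Uᵀ * (V * diagonal d * Vᵀ) * U) j j)
      ≤ ∑ j, c j * ∑ i, (Vᵀ * U) i j ^ 2 * φ (d i) := by
        gcongr with j
        · exact hc0 j
        · rw [diag_conj_eq_sum_sq_mul]
          exact hφ.map_sum_le (fun i _ => sq_nonneg _) (sum_sq_apply_right_eq_one hP j)
            fun i _ => Set.mem_univ _
    _ = ∑ i, ∑ j, c i * φ (d i) * (Vᵀ * U) i j ^ 2 := by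
        simp only [Finset.mul_sum]
        rw [Finset.sum_comm]
        exact Finset.sum_congr rfl fun i _ => Finset.sum_congr rfl fun j _ => by
          linear_combination φ (d i) * weight_mul_sq_apply_eq hV hU hc i j
    _ = ∑ i, c i * φ (d i) := by
        simp only [← Finset.mul_sum, sum_sq_apply_left_eq_one hP, mul_one]

end OrthogonalConjugation

section CosineCoefficients

open Real

/-- The normalized Lebesgue measure on the circle, realized on `(-π, π]`: integrals against it are
the means `(1 / 2π) ∫` of the theory of Toeplitz matrices. -/
noncomputable def circleMeasure : Measure ℝ :=
  ProbabilityTheory.cond volume (Set.Ioc (-π) π)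

lemma volume_Ioc_neg_pi_pi : volume (Set.Ioc (-π) π) = ENNReal.ofReal (2 * π) := by
  rw [Real.volume_Ioc, sub_neg_eq_add, two_mul]

instance : IsProbabilityMeasure circleMeasure :=
  ProbabilityTheory.cond_isProbabilityMeasure_of_finite
    (by simp [pi_pos]) (by simp)

lemma integral_circleMeasure {E : Type*} [NormedAddCommGroup E] [NormedSpace ℝ E] (g : ℝ → E) :
    ∫ x, g x ∂circleMeasure = (2 * π)⁻¹ • ∫ x in (-π)..π, g x := by
  rw [circleMeasure, ProbabilityTheory.cond, integral_smul_measure, volume_Ioc_neg_pi_pi,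
    ENNReal.toReal_inv, ENNReal.toReal_ofReal two_pi_pos.le,
    intervalIntegral.integral_of_le (by linarith [pi_pos])]

lemma integrable_circleMeasure_iff {E : Type*} [NormedAddCommGroup E] {g : ℝ → E} :
    Integrable g circleMeasure ↔ IntegrableOn g (Set.Ioc (-π) π) := by
  rw [circleMeasure, ProbabilityTheory.cond]
  exact integrable_smul_measure (by simp) (by simp [pi_pos])

/-- The cosine coefficients `(1 / 2π) ∫ f(x) cos(kx) dx`, which are the real parts of the Fourier
coefficients of a real function `f`. -/
noncomputable def cosCoef (f : ℝ → ℝ) (k : ℤ) : ℝ := ∫ x, f x * cos (k * x) ∂circleMeasure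

lemma cosCoef_neg (f : ℝ → ℝ) (k : ℤ) : cosCoef f (-k) = cosCoef f k := by
  simp only [cosCoef, Int.cast_neg, neg_mul, cos_neg]

lemma cosCoef_one (k : ℤ) : cosCoef (fun _ => 1) k = if k = 0 then 1 else 0 := by
  split_ifs with h
  · simp [cosCoef, h]
  · have hk : (k : ℝ) ≠ 0 := by exact_mod_cast h
    simp only [cosCoef, one_mul, integral_circleMeasure]
    rw [intervalIntegral.integral_comp_mul_left (fun x => cos x) hk, integral_cos]
    simp [sin_int_mul_pi]

variable {f : ℝ → ℝ}

lemma integrable_mul_cos (hf : Integrable f circleMeasure) (k : ℤ) :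
    Integrable (fun x => f x * cos (k * x)) circleMeasure :=
  hf.mul_bdd (c := 1) (by fun_prop) (.of_forall fun _ => abs_cos_le_one _)

lemma integrable_mul_sin (hf : Integrable f circleMeasure) (k : ℤ) :
    Integrable (fun x => f x * sin (k * x)) circleMeasure :=
  hf.mul_bdd (c := 1) (by fun_prop) (.of_forall fun _ => abs_sin_le_one _)

lemma fourierCoef_ofReal (hf : Integrable f circleMeasure) (k : ℤ) :
    fourierCoef (fun x => (f x : ℂ)) k =
      cosCoef f k - (∫ x, f x * sin (k * x) ∂circleMeasure : ℝ) * Complex.I := by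
  have hexp (x : ℝ) : (f x : ℂ) * Complex.exp (-Complex.I * k * x) =
      (f x * cos (k * x) : ℝ) - (f x * sin (k * x) : ℝ) * Complex.I := by
    rw [show -Complex.I * k * x = ((-(k * x) : ℝ) : ℂ) * Complex.I by push_cast; ring,
      Complex.exp_mul_I, ← Complex.ofReal_cos, ← Complex.ofReal_sin, cos_neg, sin_neg]
    push_cast
    ring
  calc fourierCoef (fun x => (f x : ℂ)) k
      = ∫ x, (f x : ℂ) * Complex.exp (-Complex.I * k * x) ∂circleMeasure := by
        simp [integral_circleMeasure, fourierCoef]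
    _ = _ := by
        simp only [hexp]
        rw [integral_sub (integrable_mul_cos hf k).ofReal
          ((integrable_mul_sin hf k).ofReal.mul_const _), integral_mul_const,
          integral_complex_ofReal, integral_complex_ofReal, cosCoef]

lemma integral_mul_sin_eq_zero_of_even (heven : ∀ x, f (-x) = f x) (k : ℤ) :
    ∫ x, f x * sin (k * x) ∂circleMeasure = 0 := by
  have hneg := intervalIntegral.integral_comp_neg (a := -π) (b := π) fun x => f x * sin (k * x)
  simp only [heven, mul_neg, sin_neg, neg_neg, intervalIntegral.integral_neg] at hneg
  rw [integral_circleMeasure, self_eq_neg.1 hneg.symm, smul_zero]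

lemma fourierCoeffOn_neg_pi_pi (g : ℝ → ℂ) (k : ℤ) :
    fourierCoeffOn (neg_lt_self pi_pos) g k = fourierCoef g k := by
  rw [fourierCoeffOn_eq_integral, fourierCoef, Complex.real_smul, sub_neg_eq_add, ← two_mul]
  push_cast
  congr 1
  refine intervalIntegral.integral_congr fun x _ => ?_
  rw [fourier_coe_apply, smul_eq_mul, mul_comm]
  congr 2
  push_cast
  field_simp

lemma hasSum_sq_cosCoef (hf : MemLp f 2 circleMeasure) (heven : ∀ x, f (-x) = f x) :
    HasSum (fun k : ℤ => cosCoef f k ^ 2) (∫ x, f x ^ 2 ∂circleMeasure) := by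
  have hf' : MemLp (fun x => (f x : ℂ)) 2 (volume.restrict (Set.Ioc (-π) π)) := by
    refine (hf.of_measure_le_smul (c := volume (Set.Ioc (-π) π)) (by simp) ?_).ofReal
    rw [circleMeasure, ProbabilityTheory.cond, smul_smul,
      ENNReal.mul_inv_cancel (by simp [pi_pos]) (by simp), one_smul]
  have hparseval := hasSum_sq_fourierCoeffOn (neg_lt_self pi_pos) hf'
  simpa [fourierCoeffOn_neg_pi_pi, fourierCoef_ofReal (hf.integrable one_le_two),
    integral_mul_sin_eq_zero_of_even heven, integral_circleMeasure, ← two_mul] using hparseval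

end CosineCoefficients

section ToeplitzMatrix

variable {f : ℝ → ℝ} {n : ℕ}

lemma toeplitzR_apply (hf : Integrable f circleMeasure) (i j : Fin n) :
    toeplitzR (fun x => (f x : ℂ)) n i j = cosCoef f (i - j) := by
  simp [toeplitzR, fourierCoef_ofReal hf]

lemma toeplitzR_transpose (hf : Integrable f circleMeasure) (n : ℕ) :
    (toeplitzR (fun x => (f x : ℂ)) n)ᵀ = toeplitzR (fun x => (f x : ℂ)) n := by
  ext i j
  rw [transpose_apply, toeplitzR_apply hf, toeplitzR_apply hf, ← cosCoef_neg, neg_sub]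

lemma toeplitzR_one (n : ℕ) : toeplitzR (fun _ => 1) n = 1 := by
  ext i j
  have := toeplitzR_apply (integrable_const (μ := circleMeasure) (1 : ℝ)) i j
  simpa [cosCoef_one, one_apply, sub_eq_zero, Fin.ext_iff] using this

lemma flipM_mul_toeplitzR (hf : Integrable f circleMeasure) (n : ℕ) :
    flipM n * toeplitzR (fun x => (f x : ℂ)) n = toeplitzR (fun x => (f x : ℂ)) n * flipM n := by
  ext i j
  rw [flipM_mul_apply, mul_flipM_apply, toeplitzR_apply hf, toeplitzR_apply hf, ← cosCoef_neg]
  congr 1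
  simp only [Fin.val_rev]
  omega

end ToeplitzMatrix

section SpectralDensity

open Real

variable {n : ℕ} {f : ℝ → ℝ}

/-- The density `|∑ₖ vₖ e^{ikx}|²` of a real vector `v`, written in real terms. The mean of `f`
under it is the value at `v` of the quadratic form of `T_n(f)`. -/
noncomputable def spectralDensity (v : Fin n → ℝ) (x : ℝ) : ℝ :=
  (∑ k, v k * cos (k * x)) ^ 2 + (∑ k, v k * sin (k * x)) ^ 2

lemma spectralDensity_nonneg (v : Fin n → ℝ) (x : ℝ) : 0 ≤ spectralDensity v x := by
  unfold spectralDensity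
  positivity

lemma spectralDensity_eq_sum_cos (v : Fin n → ℝ) (x : ℝ) :
    spectralDensity v x = ∑ k, ∑ l, v k * v l * cos (((k : ℤ) - (l : ℤ) : ℤ) * x) := by
  rw [spectralDensity, sq, sq, Finset.sum_mul_sum, Finset.sum_mul_sum, ← Finset.sum_add_distrib]
  refine Finset.sum_congr rfl fun k _ => ?_
  rw [← Finset.sum_add_distrib]
  refine Finset.sum_congr rfl fun l _ => ?_
  push_cast
  rw [sub_mul, cos_sub]
  ring

lemma mul_spectralDensity (v : Fin n → ℝ) (x : ℝ) : f x * spectralDensity v x =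
    ∑ k, ∑ l, v k * v l * (f x * cos (((k : ℤ) - (l : ℤ) : ℤ) * x)) := by
  simp only [spectralDensity_eq_sum_cos, Finset.mul_sum, mul_left_comm (f x)]

lemma integrable_mul_spectralDensity (hf : Integrable f circleMeasure) (v : Fin n → ℝ) :
    Integrable (fun x => f x * spectralDensity v x) circleMeasure := by
  simp only [mul_spectralDensity]
  exact integrable_finsetSum _ fun k _ => integrable_finsetSum _ fun l _ =>
    (integrable_mul_cos hf _).const_mul _

lemma integral_mul_spectralDensity (hf : Integrable f circleMeasure) (v : Fin n → ℝ) :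
    ∫ x, f x * spectralDensity v x ∂circleMeasure =
      v ⬝ᵥ toeplitzR (fun x => (f x : ℂ)) n *ᵥ v := by
  have hint (k l : Fin n) : Integrable
      (fun x => v k * v l * (f x * cos (((k : ℤ) - (l : ℤ) : ℤ) * x))) circleMeasure :=
    (integrable_mul_cos hf _).const_mul _
  simp only [mul_spectralDensity]
  rw [integral_finsetSum _ fun k _ => integrable_finsetSum _ fun l _ => hint k l, dotProduct]
  refine Finset.sum_congr rfl fun k _ => ?_
  rw [integral_finsetSum _ fun l _ => hint k l, mulVec, dotProduct, Finset.mul_sum]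
  refine Finset.sum_congr rfl fun l _ => ?_
  rw [integral_const_mul, toeplitzR_apply hf, cosCoef]
  ring

lemma integral_mul_spectralDensity_col (hf : Integrable f circleMeasure)
    (V : Matrix (Fin n) (Fin n) ℝ) (i : Fin n) :
    ∫ x, f x * spectralDensity (V.col i) x ∂circleMeasure =
      (Vᵀ * toeplitzR (fun x => (f x : ℂ)) n * V) i i := by
  rw [integral_mul_spectralDensity hf, Matrix.mul_assoc]
  rfl

lemma integral_spectralDensity (v : Fin n → ℝ) :
    ∫ x, spectralDensity v x ∂circleMeasure = v ⬝ᵥ v := by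
  simpa [toeplitzR_one] using integral_mul_spectralDensity (integrable_const (1 : ℝ)) v

lemma integrable_spectralDensity (v : Fin n → ℝ) :
    Integrable (spectralDensity v) circleMeasure := by
  simpa using integrable_mul_spectralDensity (integrable_const (1 : ℝ)) v

lemma sum_mul_spectralDensity_col (V : Matrix (Fin n) (Fin n) ℝ) (d : Fin n → ℝ) (x : ℝ) :
    ∑ i, d i * spectralDensity (V.col i) x =
      ∑ k, ∑ l, (V * diagonal d * Vᵀ) k l * cos (((k : ℤ) - (l : ℤ) : ℤ) * x) := by
  simp only [spectralDensity_eq_sum_cos, Matrix.mul_apply (M := V * diagonal d), mul_diagonal,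
    transpose_apply, Finset.mul_sum, Finset.sum_mul, col_apply]
  rw [Finset.sum_comm]
  refine Finset.sum_congr rfl fun k _ => ?_
  rw [Finset.sum_comm]
  exact Finset.sum_congr rfl fun l _ => Finset.sum_congr rfl fun i _ => by ring

lemma sum_spectralDensity_col {V : Matrix (Fin n) (Fin n) ℝ} (hV : V * Vᵀ = 1) (x : ℝ) :
    ∑ i, spectralDensity (V.col i) x = n := by
  have hsum := sum_mul_spectralDensity_col V 1 x
  rw [Pi.one_def, diagonal_one, Matrix.mul_one, hV] at hsum
  simpa [one_apply] using hsum

lemma integral_sub_sq_mul_spectralDensity {v : Fin n → ℝ} (hv : v ⬝ᵥ v = 1)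
    (hf : MemLp f 2 circleMeasure) :
    ∫ x, (f x - ∫ y, f y * spectralDensity v y ∂circleMeasure) ^ 2 * spectralDensity v x
        ∂circleMeasure =
      ∫ x, f x ^ 2 * spectralDensity v x ∂circleMeasure -
        (∫ x, f x * spectralDensity v x ∂circleMeasure) ^ 2 := by
  set m := ∫ y, f y * spectralDensity v y ∂circleMeasure with hm
  have hint₁ := (integrable_mul_spectralDensity (hf.integrable one_le_two) v).const_mul (2 * m)
  have hint₂ := integrable_mul_spectralDensity hf.integrable_sq v
  have hint₃ : Integrable
      (fun x => f x ^ 2 * spectralDensity v x - 2 * m * (f x * spectralDensity v x))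
      circleMeasure := hint₂.sub hint₁
  have hexpand (x : ℝ) : (f x - m) ^ 2 * spectralDensity v x =
      f x ^ 2 * spectralDensity v x - 2 * m * (f x * spectralDensity v x) +
        m ^ 2 * spectralDensity v x := by ring
  simp only [hexpand]
  rw [integral_add hint₃ ((integrable_spectralDensity v).const_mul _),
    integral_sub hint₂ hint₁, integral_const_mul, integral_const_mul, integral_spectralDensity, hv,
    ← hm]
  ring

lemma sq_integral_mul_spectralDensity_le {v : Fin n → ℝ} (hv : v ⬝ᵥ v = 1)
    (hf : MemLp f 2 circleMeasure) :
    (∫ x, f x * spectralDensity v x ∂circleMeasure) ^ 2 ≤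
      ∫ x, f x ^ 2 * spectralDensity v x ∂circleMeasure := by
  rw [← sub_nonneg, ← integral_sub_sq_mul_spectralDensity hv hf]
  exact integral_nonneg fun x => mul_nonneg (sq_nonneg _) (spectralDensity_nonneg v x)

end SpectralDensity

section FlipDiagonalizationOfSymbol

variable {n : ℕ} {f : ℝ → ℝ}

/-- The columns of the orthogonal matrix `V` are joint eigenvectors of the flip matrix, with
alternating eigenvalues `1, -1, 1, …`, and of `T_n(f)`, with eigenvalues `lam`. -/
structure IsFlipDiagonalization (f : ℝ → ℝ) (V : Matrix (Fin n) (Fin n) ℝ) (lam : Fin n → ℝ) :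
    Prop where
  mul_transpose : V * Vᵀ = 1
  flip_eq : flipM n = V * diagonal (fun i : Fin n => (-1 : ℝ) ^ (i : ℕ)) * Vᵀ
  toeplitz_eq : toeplitzR (fun x => (f x : ℂ)) n = V * diagonal lam * Vᵀ

lemma exists_isFlipDiagonalization (hf : Integrable f circleMeasure) (n : ℕ) :
    ∃ (V : Matrix (Fin n) (Fin n) ℝ) (lam : Fin n → ℝ), IsFlipDiagonalization f V lam :=
  let ⟨V, lam, hV, hY, hT⟩ :=
    exists_diagonalization_flipM (toeplitzR_transpose hf n) (flipM_mul_toeplitzR hf n)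
  ⟨V, lam, hV, hY, hT⟩

namespace IsFlipDiagonalization

variable {V : Matrix (Fin n) (Fin n) ℝ} {lam : Fin n → ℝ}

lemma transpose_mul (h : IsFlipDiagonalization f V lam) : Vᵀ * V = 1 :=
  mul_eq_one_comm.1 h.mul_transpose

lemma flip_mul_toeplitz_eq (h : IsFlipDiagonalization f V lam) :
    flipM n * toeplitzR (fun x => (f x : ℂ)) n =
      V * (diagonal (fun i : Fin n => (-1 : ℝ) ^ (i : ℕ)) * diagonal lam) * Vᵀ := by
  rw [h.flip_eq, h.toeplitz_eq]
  simp only [Matrix.mul_assoc, ← Matrix.mul_assoc Vᵀ, h.transpose_mul, Matrix.one_mul]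

lemma col_dotProduct_col (h : IsFlipDiagonalization f V lam) (i : Fin n) :
    V.col i ⬝ᵥ V.col i = 1 :=
  congr($h.transpose_mul i i).trans (one_apply_eq i)

lemma integral_mul_spectralDensity (h : IsFlipDiagonalization f V lam)
    (hf : Integrable f circleMeasure) (i : Fin n) :
    ∫ x, f x * spectralDensity (V.col i) x ∂circleMeasure = lam i := by
  rw [integral_mul_spectralDensity_col hf, h.toeplitz_eq, Matrix.mul_assoc V, ← Matrix.mul_assoc Vᵀ,
    h.transpose_mul, Matrix.one_mul, Matrix.mul_assoc, h.transpose_mul, Matrix.mul_one,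
    diagonal_apply_eq]

/- The frequencies `2k + 1 - n` are pairwise distinct, so integrating an `L²` function against this
sum only gives `o(n)`: this is why each parity class sees the whole distribution of the symbol. -/
lemma sum_neg_one_pow_mul_spectralDensity (h : IsFlipDiagonalization f V lam) (x : ℝ) :
    ∑ i : Fin n, (-1 : ℝ) ^ (i : ℕ) * spectralDensity (V.col i) x =
      ∑ k : Fin n, Real.cos ((2 * (k : ℤ) + 1 - n : ℤ) * x) := by
  rw [sum_mul_spectralDensity_col, ← h.flip_eq]
  refine Finset.sum_congr rfl fun k _ => ?_
  simp only [flipM_apply, ite_mul, one_mul, zero_mul, Finset.sum_ite_eq, Finset.mem_univ, if_true]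
  congr 3
  rw [Fin.val_rev]
  omega

end IsFlipDiagonalization

end FlipDiagonalizationOfSymbol

section ParityClasses

/-- The indicator of one parity class of indices: the even ones for `ε = 1` and the odd ones for
`ε = -1`. In the numbering of the paper, which starts at `1`, these are `Λ_n⁺` and `Λ_n⁻`. -/
noncomputable def parityWeight (ε : ℤˣ) (i : ℕ) : ℝ :=
  (1 + (ε : ℤ) * (-1) ^ i) / 2

lemma parityWeight_eq_zero_or_one (ε : ℤˣ) (i : ℕ) :
    parityWeight ε i = 0 ∨ parityWeight ε i = 1 := by
  rcases Int.units_eq_one_or ε with rfl | rfl <;>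
    rcases neg_one_pow_eq_or ℝ i with h | h <;> norm_num [parityWeight, h]

lemma parityWeight_nonneg (ε : ℤˣ) (i : ℕ) : 0 ≤ parityWeight ε i := by
  rcases parityWeight_eq_zero_or_one ε i with h | h <;> norm_num [h]

lemma parityWeight_le_one (ε : ℤˣ) (i : ℕ) : parityWeight ε i ≤ 1 := by
  rcases parityWeight_eq_zero_or_one ε i with h | h <;> norm_num [h]

variable {n : ℕ}

lemma sum_parityWeight_mul (ε : ℤˣ) (a : Fin n → ℝ) :
    ∑ i : Fin n, parityWeight ε i * a i =
      (∑ i, a i + (ε : ℤ) * ∑ i : Fin n, (-1) ^ (i : ℕ) * a i) / 2 := by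
  rw [Finset.mul_sum, ← Finset.sum_add_distrib, Finset.sum_div]
  exact Finset.sum_congr rfl fun i _ => by rw [parityWeight]; ring

lemma abs_sum_parityWeight_mul_le (ε : ℤˣ) (a : Fin n → ℝ) :
    |∑ i : Fin n, parityWeight ε i * a i| ≤ ∑ i, |a i| :=
  (Finset.abs_sum_le_sum_abs _ _).trans <| Finset.sum_le_sum fun i _ => by
    rw [abs_mul, abs_of_nonneg (parityWeight_nonneg ε i)]
    exact mul_le_of_le_one_left (abs_nonneg _) (parityWeight_le_one ε i)

lemma IsFlipDiagonalization.mul_diagonal_parityWeight_mul_transpose {f : ℝ → ℝ}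
    {V : Matrix (Fin n) (Fin n) ℝ} {lam : Fin n → ℝ} (h : IsFlipDiagonalization f V lam) (ε : ℤˣ) :
    V * diagonal (fun i : Fin n => parityWeight ε i) * Vᵀ =
      (2⁻¹ : ℝ) • (1 + ((ε : ℤ) : ℝ) • flipM n) := by
  have hdiag : diagonal (fun i : Fin n => parityWeight ε i) =
      (2⁻¹ : ℝ) • (1 + ((ε : ℤ) : ℝ) • diagonal fun i : Fin n => (-1 : ℝ) ^ (i : ℕ)) := by
    rw [← diagonal_one, ← diagonal_smul, diagonal_add, ← diagonal_smul]
    congr 1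
    ext i
    simp only [parityWeight, Pi.smul_apply, smul_eq_mul]
    ring
  rw [hdiag, Matrix.mul_smul, Matrix.smul_mul, Matrix.mul_add, Matrix.add_mul, Matrix.mul_one,
    h.mul_transpose, Matrix.mul_smul, Matrix.smul_mul, ← h.flip_eq]

end ParityClasses

section ConvexStability

variable {n : ℕ} {f g : ℝ → ℝ} {U V : Matrix (Fin n) (Fin n) ℝ} {lam kap : Fin n → ℝ}

lemma sum_integral_mul_spectralDensity_col (hV : V * Vᵀ = 1) (hf : Integrable f circleMeasure) :
    ∑ i, ∫ x, f x * spectralDensity (V.col i) x ∂circleMeasure =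
      n * ∫ x, f x ∂circleMeasure := by
  rw [← integral_finsetSum _ fun i _ => integrable_mul_spectralDensity hf _]
  simp only [← Finset.mul_sum, sum_spectralDensity_col hV, integral_mul_const]
  rw [mul_comm]

lemma IsFlipDiagonalization.abs_sub_conj_toeplitz_le (hU : IsFlipDiagonalization g U kap)
    (hf : Integrable f circleMeasure) (hg : Integrable g circleMeasure) (j : Fin n) :
    |kap j - (Uᵀ * toeplitzR (fun x => (f x : ℂ)) n * U) j j| ≤
      ∫ x, |f x - g x| * spectralDensity (U.col j) x ∂circleMeasure := by
  rw [← hU.integral_mul_spectralDensity hg, ← integral_mul_spectralDensity_col hf,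
    ← integral_sub (integrable_mul_spectralDensity hg _) (integrable_mul_spectralDensity hf _)]
  refine (abs_integral_le_integral_abs).trans_eq (integral_congr_ae (.of_forall fun x => ?_))
  beta_reduce
  rw [← sub_mul, abs_mul, abs_of_nonneg (spectralDensity_nonneg _ x), abs_sub_comm]

variable {φ : ℝ → ℝ} {K : NNReal}

lemma sum_parityWeight_mul_convex_sub_le (hV : IsFlipDiagonalization f V lam)
    (hU : IsFlipDiagonalization g U kap) (hf : Integrable f circleMeasure)
    (hg : Integrable g circleMeasure) (hφ : ConvexOn ℝ Set.univ φ) (hφK : LipschitzWith K φ)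
    (ε : ℤˣ) :
    ∑ i : Fin n, parityWeight ε i * φ (kap i) - ∑ i : Fin n, parityWeight ε i * φ (lam i) ≤
      K * (n * ∫ x, |f x - g x| ∂circleMeasure) := by
  have hint : Integrable (fun x => |f x - g x|) circleMeasure := (hf.sub hg).abs
  set m : Fin n → ℝ := fun j => (Uᵀ * toeplitzR (fun x => (f x : ℂ)) n * U) j j with hm
  have hpeierls : ∑ j : Fin n, parityWeight ε j * φ (m j) ≤
      ∑ i : Fin n, parityWeight ε i * φ (lam i) := by
    rw [hm, hV.toeplitz_eq]
    refine sum_weight_mul_convex_diag_le hV.mul_transpose hU.mul_transpose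
      (fun i : Fin n => parityWeight_nonneg ε i) ?_ hφ lam
    rw [hV.mul_diagonal_parityWeight_mul_transpose, hU.mul_diagonal_parityWeight_mul_transpose]
  have hlipschitz (j : Fin n) : |φ (kap j) - φ (m j)| ≤
      K * ∫ x, |f x - g x| * spectralDensity (U.col j) x ∂circleMeasure :=
    (hφK.dist_le_mul _ _).trans <|
      mul_le_mul_of_nonneg_left (hU.abs_sub_conj_toeplitz_le hf hg j) K.coe_nonneg
  calc ∑ i : Fin n, parityWeight ε i * φ (kap i) - ∑ i : Fin n, parityWeight ε i * φ (lam i)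
      ≤ ∑ i : Fin n, parityWeight ε i * φ (kap i) - ∑ i : Fin n, parityWeight ε i * φ (m i) :=
        sub_le_sub_left hpeierls _
    _ = ∑ i : Fin n, parityWeight ε i * (φ (kap i) - φ (m i)) := by
        simp only [mul_sub, Finset.sum_sub_distrib]
    _ ≤ ∑ i, |φ (kap i) - φ (m i)| := (le_abs_self _).trans (abs_sum_parityWeight_mul_le ε _)
    _ ≤ ∑ i, K * ∫ x, |f x - g x| * spectralDensity (U.col i) x ∂circleMeasure :=
        Finset.sum_le_sum fun i _ => hlipschitz i
    _ = K * (n * ∫ x, |f x - g x| ∂circleMeasure) := by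
        rw [← Finset.mul_sum, sum_integral_mul_spectralDensity_col hU.mul_transpose hint]

lemma abs_sum_parityWeight_mul_convex_sub_le (hV : IsFlipDiagonalization f V lam)
    (hU : IsFlipDiagonalization g U kap) (hf : Integrable f circleMeasure)
    (hg : Integrable g circleMeasure) (hφ : ConvexOn ℝ Set.univ φ) (hφK : LipschitzWith K φ)
    (ε : ℤˣ) :
    |∑ i : Fin n, parityWeight ε i * φ (lam i) - ∑ i : Fin n, parityWeight ε i * φ (kap i)| ≤
      K * (n * ∫ x, |f x - g x| ∂circleMeasure) := by
  refine abs_sub_le_iff.2 ⟨?_, sum_parityWeight_mul_convex_sub_le hV hU hf hg hφ hφK ε⟩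
  simpa only [abs_sub_comm] using sum_parityWeight_mul_convex_sub_le hU hV hg hf hφ hφK ε

end ConvexStability

section Averages

open Topology

lemma sum_range_sum_range_sub {M : Type*} [AddCommGroup M] (a : ℤ → M) (n : ℕ) :
    ∑ i ∈ Finset.range n, ∑ j ∈ Finset.range n, a (i - j) =
      ∑ m ∈ Finset.range n, (∑ k ∈ Finset.range (m + 1), (a k + a (-k)) - a 0) := by
  induction n with
  | zero => simp
  | succ n ih =>
    have hlast_row : ∑ j ∈ Finset.range n, a (n - j) = ∑ k ∈ Finset.range n, a (k + 1 : ℕ) := by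
      rw [← Finset.sum_range_reflect]
      refine Finset.sum_congr rfl fun j hj => congrArg a ?_
      have := Finset.mem_range.1 hj
      omega
    have hlast_col :
        ∑ i ∈ Finset.range n, a (i - n) = ∑ k ∈ Finset.range n, a (-(k + 1 : ℕ)) := by
      rw [← Finset.sum_range_reflect]
      refine Finset.sum_congr rfl fun j hj => congrArg a ?_
      have := Finset.mem_range.1 hj
      omega
    rw [Finset.sum_range_succ (fun m => _ - a 0), ← ih, Finset.sum_range_succ' (fun k : ℕ => _ + _),
      Finset.sum_range_succ, Finset.sum_range_succ]
    simp only [Finset.sum_range_succ _ n, Finset.sum_add_distrib, hlast_row, hlast_col, sub_self,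
      Nat.cast_zero, neg_zero]
    abel

lemma tendsto_average_toeplitz_of_hasSum {E : Type*} [NormedAddCommGroup E] [NormedSpace ℝ E]
    {a : ℤ → E} {S : E} (ha : HasSum a S) :
    Tendsto (fun n : ℕ => (n : ℝ)⁻¹ • ∑ i : Fin n, ∑ j : Fin n, a (i - j)) atTop (𝓝 S) := by
  have hpartial : Tendsto (fun m : ℕ => ∑ k ∈ Finset.range (m + 1), (a k + a (-k)) - a 0) atTop
      (𝓝 S) := by
    simpa using (ha.nat_add_neg.tendsto_sum_nat.comp (tendsto_add_atTop_nat 1)).sub_const (a 0)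
  have hcesaro := hpartial.cesaro_smul
  simp only [← sum_range_sum_range_sub] at hcesaro
  simpa only [Finset.sum_range] using hcesaro

lemma tendsto_average_abs_of_sq {a : (n : ℕ) → Fin n → ℝ}
    (ha : Tendsto (fun n : ℕ => (n : ℝ)⁻¹ * ∑ i, a n i ^ 2) atTop (𝓝 0)) :
    Tendsto (fun n : ℕ => (n : ℝ)⁻¹ * ∑ i, |a n i|) atTop (𝓝 0) := by
  refine squeeze_zero (g := fun n : ℕ => √((n : ℝ)⁻¹ * ∑ i, a n i ^ 2)) (fun n => by positivity)
    (fun n => Real.le_sqrt_of_sq_le ?_) (by rw [← Real.sqrt_zero]; exact ha.sqrt)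
  have hcauchy : (∑ i, |a n i|) ^ 2 ≤ n * ∑ i, a n i ^ 2 := by
    simpa using sq_sum_le_card_mul_sum_sq (s := Finset.univ) (f := fun i => |a n i|)
  calc ((n : ℝ)⁻¹ * ∑ i, |a n i|) ^ 2
      ≤ (n : ℝ)⁻¹ ^ 2 * (n * ∑ i, a n i ^ 2) := by
        rw [mul_pow]
        gcongr
    _ ≤ (n : ℝ)⁻¹ * ∑ i, a n i ^ 2 := by
        rw [sq, ← mul_assoc, mul_assoc (n : ℝ)⁻¹]
        gcongr
        exact mul_le_of_le_one_right (by positivity) inv_mul_le_one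

lemma tendsto_average_of_sq {a : (n : ℕ) → Fin n → ℝ}
    (ha : Tendsto (fun n : ℕ => (n : ℝ)⁻¹ * ∑ i, a n i ^ 2) atTop (𝓝 0)) :
    Tendsto (fun n : ℕ => (n : ℝ)⁻¹ * ∑ i, a n i) atTop (𝓝 0) := by
  refine squeeze_zero_norm (fun n => ?_) (tendsto_average_abs_of_sq ha)
  rw [norm_mul, norm_inv, RCLike.norm_natCast]
  gcongr
  exact Finset.abs_sum_le_sum_abs _ _

end Averages

section SquareIntegrableSymbols

open Topology

lemma memLp_comp_of_lipschitzWith {α E F : Type*} [MeasurableSpace α] {μ : Measure α}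
    [IsFiniteMeasure μ] [NormedAddCommGroup E] [NormedAddCommGroup F] {p : ENNReal} {φ : E → F}
    {K : NNReal} (hφ : LipschitzWith K φ) {g : α → E} (hg : MemLp g p μ) :
    MemLp (fun x => φ (g x)) p μ := by
  have hφ₀ : LipschitzWith K fun y => φ y - φ 0 :=
    LipschitzWith.of_dist_le_mul fun x y => by simpa using hφ.dist_le_mul x y
  simpa [Function.comp_def, Pi.add_def] using
    (hφ₀.comp_memLp (sub_self _) hg).add (memLp_const (φ 0))

/-- The averages of `G` over one parity class of the eigenvalues `lam n` converge to half the mean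
of `G ∘ f`; the half is there because the sum is divided by `n` and not by the size of the class. -/
structure HasParityLimit {E : Type*} [NormedAddCommGroup E] [NormedSpace ℝ E] (f : ℝ → ℝ)
    (lam : (n : ℕ) → Fin n → ℝ) (ε : ℤˣ) (G : ℝ → E) : Prop where
  integrable_comp : Integrable (fun x => G (f x)) circleMeasure
  tendsto : Tendsto (fun n : ℕ => (n : ℝ)⁻¹ • ∑ i : Fin n, parityWeight ε i • G (lam n i)) atTop
    (𝓝 ((2 : ℝ)⁻¹ • ∫ x, G (f x) ∂circleMeasure))

variable {f φ : ℝ → ℝ} {K : NNReal}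

lemma IsFlipDiagonalization.sum_integral_sub_sq_mul_spectralDensity {n : ℕ}
    {V : Matrix (Fin n) (Fin n) ℝ} {lam : Fin n → ℝ} (h : IsFlipDiagonalization f V lam)
    (hf : MemLp f 2 circleMeasure) :
    ∑ i, ∫ x, (f x - lam i) ^ 2 * spectralDensity (V.col i) x ∂circleMeasure =
      n * ∫ x, f x ^ 2 ∂circleMeasure - ∑ i : Fin n, ∑ j : Fin n, cosCoef f (i - j) ^ 2 := by
  have hf₁ : Integrable f circleMeasure := hf.integrable one_le_two
  have hvariance (i : Fin n) :
      ∫ x, (f x - lam i) ^ 2 * spectralDensity (V.col i) x ∂circleMeasure =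
        ∫ x, f x ^ 2 * spectralDensity (V.col i) x ∂circleMeasure - lam i ^ 2 := by
    rw [← h.integral_mul_spectralDensity hf₁]
    exact integral_sub_sq_mul_spectralDensity (h.col_dotProduct_col i) hf
  have hfrobenius : ∑ i, lam i ^ 2 = ∑ i : Fin n, ∑ j : Fin n, cosCoef f (i - j) ^ 2 := by
    simp only [← toeplitzR_apply hf₁, h.toeplitz_eq,
      sum_sq_mul_diagonal_mul_transpose h.mul_transpose]
  rw [Finset.sum_congr rfl fun i _ => hvariance i, Finset.sum_sub_distrib, hfrobenius,
    sum_integral_mul_spectralDensity_col h.mul_transpose hf.integrable_sq]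

lemma IsFlipDiagonalization.sum_parityWeight_mul_integral {n : ℕ}
    {V : Matrix (Fin n) (Fin n) ℝ} {lam : Fin n → ℝ} (h : IsFlipDiagonalization f V lam)
    {g : ℝ → ℝ} (hg : Integrable g circleMeasure) (ε : ℤˣ) :
    ∑ i : Fin n, parityWeight ε i * ∫ x, g x * spectralDensity (V.col i) x ∂circleMeasure =
      (n * ∫ x, g x ∂circleMeasure + (ε : ℤ) * ∑ k : Fin n, cosCoef g (2 * k + 1 - n)) / 2 := by
  have halternating : ∑ i : Fin n, (-1 : ℝ) ^ (i : ℕ) *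
      ∫ x, g x * spectralDensity (V.col i) x ∂circleMeasure =
        ∑ k : Fin n, cosCoef g (2 * k + 1 - n) := by
    simp only [← integral_const_mul, cosCoef]
    rw [← integral_finsetSum _ fun i _ => (integrable_mul_spectralDensity hg _).const_mul _,
      ← integral_finsetSum _ fun k _ => integrable_mul_cos hg _]
    simp only [mul_left_comm _ (g _), ← Finset.mul_sum, h.sum_neg_one_pow_mul_spectralDensity]
  rw [sum_parityWeight_mul, halternating, sum_integral_mul_spectralDensity_col h.mul_transpose hg]

lemma tendsto_average_cosCoef (hf : MemLp f 2 circleMeasure) (heven : ∀ x, f (-x) = f x) :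
    Tendsto (fun n : ℕ => (n : ℝ)⁻¹ * ∑ k : Fin n, cosCoef f (2 * k + 1 - n)) atTop (𝓝 0) := by
  refine tendsto_average_of_sq (squeeze_zero
    (g := fun n : ℕ => (n : ℝ)⁻¹ * ∫ x, f x ^ 2 ∂circleMeasure)
    (fun n => by positivity) (fun n => ?_) ?_)
  · have hinj : Function.Injective fun k : Fin n => (2 * k + 1 - n : ℤ) := fun k l hkl => by
      dsimp only at hkl
      omega
    gcongr
    exact (Finset.sum_map Finset.univ ⟨_, hinj⟩ fun k => cosCoef f k ^ 2).symm.trans_le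
      (sum_le_hasSum _ (fun _ _ => sq_nonneg _) (hasSum_sq_cosCoef hf heven))
  · simpa using tendsto_inv_atTop_nhds_zero_nat.mul_const (∫ x, f x ^ 2 ∂circleMeasure)

variable {V : (n : ℕ) → Matrix (Fin n) (Fin n) ℝ} {lam : (n : ℕ) → Fin n → ℝ}

lemma tendsto_average_integral_sub_sq_mul_spectralDensity (hf : MemLp f 2 circleMeasure)
    (heven : ∀ x, f (-x) = f x) (h : ∀ n, IsFlipDiagonalization f (V n) (lam n)) :
    Tendsto (fun n : ℕ => (n : ℝ)⁻¹ *
      ∑ i, ∫ x, (f x - lam n i) ^ 2 * spectralDensity ((V n).col i) x ∂circleMeasure)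
      atTop (𝓝 0) := by
  have hlim := (tendsto_average_toeplitz_of_hasSum (hasSum_sq_cosCoef hf heven)).const_sub
    (∫ x, f x ^ 2 ∂circleMeasure)
  rw [sub_self] at hlim
  refine hlim.congr' ?_
  filter_upwards [eventually_ne_atTop 0] with n hn
  rw [(h n).sum_integral_sub_sq_mul_spectralDensity hf, mul_sub,
    inv_mul_cancel_left₀ (Nat.cast_ne_zero.2 hn), smul_eq_mul]

lemma IsFlipDiagonalization.sq_apply_sub_integral_le {n : ℕ} {V : Matrix (Fin n) (Fin n) ℝ}
    {lam : Fin n → ℝ} (h : IsFlipDiagonalization f V lam) (hf : MemLp f 2 circleMeasure)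
    (hφ : LipschitzWith K φ) (i : Fin n) :
    (φ (lam i) - ∫ x, φ (f x) * spectralDensity (V.col i) x ∂circleMeasure) ^ 2 ≤
      K ^ 2 * ∫ x, (f x - lam i) ^ 2 * spectralDensity (V.col i) x ∂circleMeasure := by
  have hφf : MemLp (fun x => φ (f x)) 2 circleMeasure := memLp_comp_of_lipschitzWith hφ hf
  have hdiff : MemLp (fun x => φ (f x) - φ (lam i)) 2 circleMeasure := hφf.sub (memLp_const _)
  have hmean : φ (lam i) - ∫ x, φ (f x) * spectralDensity (V.col i) x ∂circleMeasure =
      -∫ x, (φ (f x) - φ (lam i)) * spectralDensity (V.col i) x ∂circleMeasure := by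
    simp only [sub_mul]
    rw [integral_sub (integrable_mul_spectralDensity (hφf.integrable one_le_two) _)
      ((integrable_spectralDensity _).const_mul _), integral_const_mul, integral_spectralDensity,
      h.col_dotProduct_col, mul_one, neg_sub]
  rw [hmean, neg_sq, ← integral_const_mul]
  refine (sq_integral_mul_spectralDensity_le (h.col_dotProduct_col i) hdiff).trans
    (integral_mono (integrable_mul_spectralDensity hdiff.integrable_sq _)
      ((integrable_mul_spectralDensity (hf.sub (memLp_const (lam i))).integrable_sq _).const_mul _)
      fun x => ?_)
  have hdist := hφ.dist_le_mul (f x) (lam i)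
  beta_reduce
  rw [← mul_assoc, ← mul_pow]
  refine mul_le_mul_of_nonneg_right (sq_le_sq.2 ?_) (spectralDensity_nonneg _ x)
  rwa [abs_mul, NNReal.abs_eq]

lemma tendsto_average_abs_apply_sub_integral (hf : MemLp f 2 circleMeasure)
    (heven : ∀ x, f (-x) = f x) (h : ∀ n, IsFlipDiagonalization f (V n) (lam n))
    (hφ : LipschitzWith K φ) :
    Tendsto (fun n : ℕ => (n : ℝ)⁻¹ * ∑ i,
      |φ (lam n i) - ∫ x, φ (f x) * spectralDensity ((V n).col i) x ∂circleMeasure|)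
      atTop (𝓝 0) := by
  refine tendsto_average_abs_of_sq (squeeze_zero
    (g := fun n : ℕ => (K : ℝ) ^ 2 * ((n : ℝ)⁻¹ *
      ∑ i, ∫ x, (f x - lam n i) ^ 2 * spectralDensity ((V n).col i) x ∂circleMeasure))
    (fun n => by positivity) (fun n => ?_) ?_)
  · rw [mul_left_comm]
    gcongr
    rw [Finset.mul_sum]
    gcongr with i
    exact (h n).sq_apply_sub_integral_le hf hφ i
  · simpa using (tendsto_average_integral_sub_sq_mul_spectralDensity hf heven h).const_mul
      ((K : ℝ) ^ 2)

lemma hasParityLimit_of_memLp_two (hf : MemLp f 2 circleMeasure) (heven : ∀ x, f (-x) = f x)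
    (h : ∀ n, IsFlipDiagonalization f (V n) (lam n)) (hφ : LipschitzWith K φ) (ε : ℤˣ) :
    HasParityLimit f lam ε φ := by
  have hφf : MemLp (fun x => φ (f x)) 2 circleMeasure := memLp_comp_of_lipschitzWith hφ hf
  have hφf₁ : Integrable (fun x => φ (f x)) circleMeasure := hφf.integrable one_le_two
  have herror : Tendsto (fun n : ℕ => (n : ℝ)⁻¹ * ∑ i : Fin n, parityWeight ε i *
      (φ (lam n i) - ∫ x, φ (f x) * spectralDensity ((V n).col i) x ∂circleMeasure))
      atTop (𝓝 0) := by
    refine squeeze_zero_norm (fun n => ?_) (tendsto_average_abs_apply_sub_integral hf heven h hφ)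
    rw [norm_mul, norm_inv, RCLike.norm_natCast]
    gcongr
    exact abs_sum_parityWeight_mul_le ε _
  have hmean := (tendsto_average_cosCoef hφf fun x => by rw [heven]).const_mul (((ε : ℤ) : ℝ) / 2)
  have hlim := (herror.add hmean).add_const (2⁻¹ * ∫ x, φ (f x) ∂circleMeasure)
  simp only [mul_zero, zero_add] at hlim
  refine ⟨hφf₁, hlim.congr' ?_⟩
  filter_upwards [eventually_ne_atTop 0] with n hn
  simp only [smul_eq_mul, mul_sub, Finset.sum_sub_distrib, (h n).sum_parityWeight_mul_integral hφf₁]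
  field_simp
  ring

end SquareIntegrableSymbols

section IntegrableSymbols

open Topology ProbabilityTheory

lemma tendsto_of_forall_approx {α X : Type*} [PseudoMetricSpace X] {l : Filter α} {u : α → X}
    {a : X} (h : ∀ η > 0, ∃ (v : α → X) (b : X),
      Tendsto v l (𝓝 b) ∧ (∀ i, dist (u i) (v i) ≤ η) ∧ dist a b ≤ η) :
    Tendsto u l (𝓝 a) := by
  refine Metric.tendsto_nhds.2 fun ε hε => ?_
  obtain ⟨v, b, hv, huv, hab⟩ := h (ε / 3) (by positivity)
  filter_upwards [Metric.tendsto_nhds.1 hv (ε / 3) (by positivity)] with i hi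
  linarith [dist_triangle4 (u i) (v i) b a, huv i, dist_comm a b]

lemma tendsto_integral_abs_sub_truncation {α : Type*} [MeasurableSpace α] {μ : Measure α}
    {f : α → ℝ} (hf : Integrable f μ) :
    Tendsto (fun A : ℝ => ∫ x, |f x - truncation f A x| ∂μ) atTop (𝓝 0) := by
  rw [← integral_zero α ℝ (μ := μ)]
  refine tendsto_integral_filter_of_dominated_convergence (fun x => 2 * |f x|)
    (.of_forall fun A => (hf.1.sub hf.1.truncation).norm)
    (.of_forall fun A => .of_forall fun x => ?_) (hf.abs.const_mul 2)
    (.of_forall fun x => tendsto_const_nhds.congr' ?_)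
  · rw [Real.norm_eq_abs, abs_abs, two_mul]
    exact (abs_sub _ _).trans (add_le_add_right (abs_truncation_le_abs_self f A x) _)
  · filter_upwards [eventually_gt_atTop |f x|] with A hA
    rw [truncation_eq_self hA, sub_self, abs_zero]

variable {f φ : ℝ → ℝ} {V : (n : ℕ) → Matrix (Fin n) (Fin n) ℝ} {lam : (n : ℕ) → Fin n → ℝ}
  {K : NNReal}

lemma abs_integral_comp_sub_le_of_lipschitzWith {α : Type*} [MeasurableSpace α] {μ : Measure α}
    [IsFiniteMeasure μ] {f g : α → ℝ} (hf : Integrable f μ) (hg : Integrable g μ)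
    (hφ : LipschitzWith K φ) :
    |∫ x, φ (f x) ∂μ - ∫ x, φ (g x) ∂μ| ≤ K * ∫ x, |f x - g x| ∂μ := by
  have hcomp {h : α → ℝ} (hh : Integrable h μ) : Integrable (fun x => φ (h x)) μ :=
    memLp_one_iff_integrable.1 (memLp_comp_of_lipschitzWith hφ (memLp_one_iff_integrable.2 hh))
  rw [← integral_sub (hcomp hf) (hcomp hg), ← integral_const_mul]
  exact abs_integral_le_integral_abs.trans (integral_mono ((hcomp hf).sub (hcomp hg)).abs
    ((hf.sub hg).abs.const_mul _) fun x => hφ.dist_le_mul (f x) (g x))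

lemma hasParityLimit_of_convexOn (hf : Integrable f circleMeasure) (heven : ∀ x, f (-x) = f x)
    (h : ∀ n, IsFlipDiagonalization f (V n) (lam n)) (hφ : ConvexOn ℝ Set.univ φ)
    (hφK : LipschitzWith K φ) (ε : ℤˣ) :
    HasParityLimit f lam ε φ := by
  refine ⟨memLp_one_iff_integrable.1
    (memLp_comp_of_lipschitzWith hφK (memLp_one_iff_integrable.2 hf)),
    tendsto_of_forall_approx fun η hη => ?_⟩
  have hK := (tendsto_integral_abs_sub_truncation hf).const_mul (K : ℝ)
  rw [mul_zero] at hK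
  obtain ⟨A, hA⟩ := (hK.eventually_le_const hη).exists
  have hg : Integrable (truncation f A) circleMeasure := hf.1.integrable_truncation
  choose U kap hU using exists_isFlipDiagonalization hg
  have hlim := hasParityLimit_of_memLp_two hf.1.memLp_truncation
    (fun x => by simp only [truncation, Function.comp_apply, heven]) hU hφK ε
  refine ⟨_, _, hlim.tendsto, fun n => ?_, ?_⟩
  · rw [dist_smul₀, norm_inv, RCLike.norm_natCast, Real.dist_eq]
    calc (n : ℝ)⁻¹ * |∑ i : Fin n, parityWeight ε i * φ (lam n i) -
          ∑ i : Fin n, parityWeight ε i * φ (kap n i)|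
        ≤ (n : ℝ)⁻¹ * (K * (n * ∫ x, |f x - truncation f A x| ∂circleMeasure)) := by
          gcongr
          exact abs_sum_parityWeight_mul_convex_sub_le (h n) (hU n) hf hg hφ hφK ε
      _ = ((n : ℝ)⁻¹ * n) * (K * ∫ x, |f x - truncation f A x| ∂circleMeasure) := by ring
      _ ≤ 1 * (K * ∫ x, |f x - truncation f A x| ∂circleMeasure) := by
          gcongr
          exact inv_mul_le_one
      _ ≤ η := by rwa [one_mul]
  · rw [dist_smul₀, Real.dist_eq]
    calc ‖(2 : ℝ)⁻¹‖ * |∫ x, φ (f x) ∂circleMeasure - ∫ x, φ (truncation f A x) ∂circleMeasure|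
        ≤ 1 * (K * ∫ x, |f x - truncation f A x| ∂circleMeasure) := by
          gcongr
          · norm_num
          · exact abs_integral_comp_sub_le_of_lipschitzWith hf hg hφK
      _ ≤ η := by rwa [one_mul]

end IntegrableSymbols

section DifferencesOfConvexFunctions

variable {E : Type*} [NormedAddCommGroup E] [NormedSpace ℝ E]

/-- Differences of two convex Lipschitz functions: the test functions by which the continuous
functions of compact support are approximated. -/
def IsDC (d : E → ℝ) : Prop :=
  ∃ (φ ψ : E → ℝ) (K L : NNReal), ConvexOn ℝ Set.univ φ ∧ ConvexOn ℝ Set.univ ψ ∧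
    LipschitzWith K φ ∧ LipschitzWith L ψ ∧ d = fun x => φ x - ψ x

namespace IsDC

lemma const (c : ℝ) : IsDC fun _ : E => c :=
  ⟨fun _ => c, fun _ => 0, 0, 0, convexOn_const _ convex_univ, convexOn_const _ convex_univ,
    .const _, .const _, by simp⟩

lemma sub {d e : E → ℝ} (hd : IsDC d) (he : IsDC e) : IsDC fun x => d x - e x := by
  obtain ⟨φ₁, ψ₁, _, _, hφ₁, hψ₁, hKφ₁, hKψ₁, rfl⟩ := hd
  obtain ⟨φ₂, ψ₂, _, _, hφ₂, hψ₂, hKφ₂, hKψ₂, rfl⟩ := he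
  refine ⟨φ₁ + ψ₂, ψ₁ + φ₂, _, _, hφ₁.add hψ₂, hψ₁.add hφ₂, hKφ₁.add hKψ₂, hKψ₁.add hKφ₂,
    funext fun x => ?_⟩
  simp only [Pi.add_apply]
  ring

lemma max {d e : E → ℝ} (hd : IsDC d) (he : IsDC e) : IsDC fun x => max (d x) (e x) := by
  obtain ⟨φ₁, ψ₁, _, _, hφ₁, hψ₁, hKφ₁, hKψ₁, rfl⟩ := hd
  obtain ⟨φ₂, ψ₂, _, _, hφ₂, hψ₂, hKφ₂, hKψ₂, rfl⟩ := he
  refine ⟨(φ₁ + ψ₂) ⊔ (φ₂ + ψ₁), ψ₁ + ψ₂, _, _, (hφ₁.add hψ₂).sup (hφ₂.add hψ₁), hψ₁.add hψ₂,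
    (hKφ₁.add hKψ₂).max (hKφ₂.add hKψ₁), hKψ₁.add hKψ₂, funext fun x => ?_⟩
  simp only [Pi.sup_apply, Pi.add_apply, ← max_sub_sub_right]
  ring_nf

lemma fold_max {ι : Type*} (s : Finset ι) (b : ℝ) {g : ι → E → ℝ} (hg : ∀ i, IsDC (g i)) :
    IsDC fun x => s.fold Max.max b (g · x) := by
  classical
  induction s using Finset.induction_on with
  | empty => exact const b
  | insert i s hi ih => simpa only [Finset.fold_insert hi] using (hg i).max ih

lemma const_sub_mul_dist (c : ℝ) (L : NNReal) (y : E) : IsDC fun x => c - L * dist x y :=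
  (const c).sub ⟨fun x => L * dist x y, fun _ => 0, L, 0,
    (convexOn_dist y convex_univ).smul L.coe_nonneg, convexOn_const _ convex_univ,
    .of_dist_le_mul fun x x' => by
      rw [Real.dist_eq, ← mul_sub, abs_mul, NNReal.abs_eq]
      exact mul_le_mul_of_nonneg_left (abs_dist_sub_le x x' y) L.coe_nonneg,
    .const _, by simp⟩

end IsDC

lemma exists_forall_sub_mul_dist_le {X : Type*} [PseudoMetricSpace X] {F : X → ℝ}
    (hF : Continuous F) (hFc : HasCompactSupport F) (hF₀ : ∀ x, 0 ≤ F x) {ε : ℝ} (hε : 0 < ε) :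
    ∃ L : NNReal, ∀ x y, F y - L * dist x y ≤ F x + ε := by
  obtain ⟨B, hB⟩ := hFc.exists_bound_of_continuous hF
  obtain ⟨δ, hδ, hFδ⟩ :=
    Metric.uniformContinuous_iff.1 (hFc.uniformContinuous_of_continuous hF) ε hε
  refine ⟨(B / δ).toNNReal, fun x y => ?_⟩
  rcases lt_or_ge (dist x y) δ with hxy | hxy
  · have hclose := (abs_lt.1 (hFδ hxy)).1
    have : 0 ≤ ((B / δ).toNNReal : ℝ) * dist x y := by positivity
    linarith
  · have hfar : B ≤ (B / δ).toNNReal * dist x y := by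
      calc B = B / δ * δ := (div_mul_cancel₀ B hδ.ne').symm
        _ ≤ (B / δ).toNNReal * dist x y := by gcongr; exact Real.le_coe_toNNReal _
    linarith [(le_abs_self _).trans (hB y), hF₀ x]

/- The approximating function is the sup-convolution `x ↦ max_y (F y - L * dist x y)`, with `y`
running over a finite net of the support of `F`, and cut off below at `0`. -/
lemma exists_isDC_abs_sub_le_of_nonneg {F : E → ℝ} (hF : Continuous F) (hFc : HasCompactSupport F)
    (hF₀ : ∀ x, 0 ≤ F x) {ε : ℝ} (hε : 0 < ε) : ∃ d, IsDC d ∧ ∀ x, |F x - d x| ≤ ε := by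
  obtain ⟨L, hL⟩ := exists_forall_sub_mul_dist_le hF hFc hF₀ (half_pos hε)
  have hr : 0 < ε / (4 * (L + 1)) := by positivity
  obtain ⟨t, -, ht, hcover⟩ := IsCompact.finite_cover_balls hFc hr
  refine ⟨_, .fold_max ht.toFinset 0 fun y => .const_sub_mul_dist (F y) L y, fun x => ?_⟩
  have hupper : ht.toFinset.fold Max.max 0 (fun y => F y - L * dist x y) ≤ F x + ε :=
    (Finset.fold_max_le _).2 ⟨by linarith [hF₀ x], fun y _ => by linarith [hL x y]⟩
  have hlower : F x - ε ≤ ht.toFinset.fold Max.max 0 (fun y => F y - L * dist x y) := by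
    rw [Finset.le_fold_max]
    by_cases hx : F x = 0
    · exact .inl (by linarith)
    obtain ⟨y, hy, hxy⟩ := Set.mem_iUnion₂.1 (hcover (subset_tsupport F hx))
    refine .inr ⟨y, ht.mem_toFinset.2 hy, ?_⟩
    have hnear : L * dist x y ≤ ε / 4 := by
      calc L * dist x y ≤ (L + 1) * (ε / (4 * (L + 1))) := by
            gcongr
            exacts [le_add_of_nonneg_right zero_le_one, (Metric.mem_ball.1 hxy).le]
        _ = ε / 4 := by field_simp
    linarith [dist_comm x y ▸ hL y x]
  rw [abs_le]
  constructor <;> linarith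

lemma exists_isDC_abs_sub_le {F : E → ℝ} (hF : Continuous F) (hFc : HasCompactSupport F)
    {ε : ℝ} (hε : 0 < ε) : ∃ d, IsDC d ∧ ∀ x, |F x - d x| ≤ ε := by
  obtain ⟨p, hp, hFp⟩ := exists_isDC_abs_sub_le_of_nonneg (F := fun x => F x ⊔ 0) (by fun_prop)
    (hFc.comp_left (g := (· ⊔ 0)) (sup_idem 0)) (fun x => le_sup_right) (half_pos hε)
  obtain ⟨q, hq, hFq⟩ := exists_isDC_abs_sub_le_of_nonneg (F := fun x => -F x ⊔ 0) (by fun_prop)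
    (hFc.comp_left (g := (- · ⊔ 0)) (by simp)) (fun x => le_sup_right) (half_pos hε)
  refine ⟨_, hp.sub hq, fun x => ?_⟩
  calc |F x - (p x - q x)| = |(F x ⊔ 0 - p x) - (-F x ⊔ 0 - q x)| := by
        congr 1
        linarith [posPart_sub_negPart (F x), posPart_def (F x), negPart_def (F x)]
    _ ≤ ε := (abs_sub _ _).trans (by linarith [hFp x, hFq x])

end DifferencesOfConvexFunctions

section TestFunctions

open Topology

lemma integrable_comp_of_hasCompactSupport {α X E : Type*} [NormedAddCommGroup E]
    [TopologicalSpace X] [MeasurableSpace α] {μ : Measure α} [IsFiniteMeasure μ] {f : α → X}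
    (hf : AEStronglyMeasurable f μ) {G : X → E} (hG : Continuous G) (hGc : HasCompactSupport G) :
    Integrable (fun x => G (f x)) μ := by
  obtain ⟨B, hB⟩ := hGc.exists_bound_of_continuous hG
  exact .of_bound (hG.comp_aestronglyMeasurable hf) B (.of_forall fun x => hB (f x))

variable {E E' : Type*} [NormedAddCommGroup E] [NormedSpace ℝ E] [NormedAddCommGroup E']
  [NormedSpace ℝ E'] {f : ℝ → ℝ} {lam : (n : ℕ) → Fin n → ℝ} {ε : ℤˣ}

namespace HasParityLimit

lemma add {G H : ℝ → E} (hG : HasParityLimit f lam ε G) (hH : HasParityLimit f lam ε H) :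
    HasParityLimit f lam ε fun t => G t + H t where
  integrable_comp := hG.integrable_comp.add hH.integrable_comp
  tendsto := by
    simpa only [smul_add, Finset.sum_add_distrib,
      integral_add hG.integrable_comp hH.integrable_comp] using hG.tendsto.add hH.tendsto

lemma clm_comp [CompleteSpace E] [CompleteSpace E'] {G : ℝ → E} (hG : HasParityLimit f lam ε G)
    (L : E →L[ℝ] E') : HasParityLimit f lam ε fun t => L (G t) where
  integrable_comp := L.integrable_comp hG.integrable_comp
  tendsto := by
    simpa only [Function.comp_def, map_smul, map_sum,
      ← L.integral_comp_comm hG.integrable_comp] using (L.continuous.tendsto _).comp hG.tendsto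

lemma of_forall_approx {G : ℝ → E} (hG : Integrable (fun x => G (f x)) circleMeasure)
    (h : ∀ η > 0, ∃ H, HasParityLimit f lam ε H ∧ ∀ t, ‖G t - H t‖ ≤ η) :
    HasParityLimit f lam ε G := by
  refine ⟨hG, tendsto_of_forall_approx fun η hη => ?_⟩
  obtain ⟨H, hH, hGH⟩ := h η hη
  refine ⟨_, _, hH.tendsto, fun n => ?_, ?_⟩
  · rw [dist_smul₀, norm_inv, RCLike.norm_natCast, dist_eq_norm, ← Finset.sum_sub_distrib]
    have hterm (i : Fin n) :
        ‖parityWeight ε i • G (lam n i) - parityWeight ε i • H (lam n i)‖ ≤ η := by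
      rw [← smul_sub, norm_smul, Real.norm_of_nonneg (parityWeight_nonneg ε i)]
      exact (mul_le_of_le_one_left (norm_nonneg _) (parityWeight_le_one ε i)).trans (hGH _)
    calc (n : ℝ)⁻¹ * ‖∑ i : Fin n,
          (parityWeight ε i • G (lam n i) - parityWeight ε i • H (lam n i))‖
        ≤ (n : ℝ)⁻¹ * (n * η) := by
          gcongr
          simpa using norm_sum_le_of_le Finset.univ fun i _ => hterm i
      _ ≤ η := by
          rw [← mul_assoc]
          exact mul_le_of_le_one_left hη.le inv_mul_le_one
  · rw [dist_smul₀, dist_eq_norm, ← integral_sub hG hH.integrable_comp]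
    calc ‖(2 : ℝ)⁻¹‖ * ‖∫ x, (G (f x) - H (f x)) ∂circleMeasure‖
        ≤ 1 * η := by
          gcongr
          · norm_num
          · simpa using norm_integral_le_of_norm_le_const (μ := circleMeasure)
              (.of_forall fun x => hGH (f x))
      _ = η := one_mul η

end HasParityLimit

variable {V : (n : ℕ) → Matrix (Fin n) (Fin n) ℝ}

lemma hasParityLimit_of_isDC (hf : Integrable f circleMeasure) (heven : ∀ x, f (-x) = f x)
    (h : ∀ n, IsFlipDiagonalization f (V n) (lam n)) {d : ℝ → ℝ} (hd : IsDC d) (ε : ℤˣ) :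
    HasParityLimit f lam ε d := by
  obtain ⟨φ, ψ, _, _, hφ, hψ, hφK, hψL, rfl⟩ := hd
  simpa [sub_eq_add_neg] using (hasParityLimit_of_convexOn hf heven h hφ hφK ε).add
    ((hasParityLimit_of_convexOn hf heven h hψ hψL ε).clm_comp (-ContinuousLinearMap.id ℝ ℝ))

lemma hasParityLimit_of_hasCompactSupport_real (hf : Integrable f circleMeasure)
    (heven : ∀ x, f (-x) = f x) (h : ∀ n, IsFlipDiagonalization f (V n) (lam n)) {G : ℝ → ℝ}
    (hG : Continuous G) (hGc : HasCompactSupport G) (ε : ℤˣ) : HasParityLimit f lam ε G :=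
  .of_forall_approx (integrable_comp_of_hasCompactSupport hf.1 hG hGc) fun _ hη =>
    let ⟨d, hd, hGd⟩ := exists_isDC_abs_sub_le hG hGc hη
    ⟨d, hasParityLimit_of_isDC hf heven h hd ε, hGd⟩

lemma hasParityLimit_of_hasCompactSupport (hf : Integrable f circleMeasure)
    (heven : ∀ x, f (-x) = f x) (h : ∀ n, IsFlipDiagonalization f (V n) (lam n)) {G : ℝ → ℂ}
    (hG : Continuous G) (hGc : HasCompactSupport G) (ε : ℤˣ) : HasParityLimit f lam ε G := by
  have hre := hasParityLimit_of_hasCompactSupport_real hf heven h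
    (Complex.continuous_re.comp hG) (hGc.comp_left Complex.zero_re) ε
  have him := hasParityLimit_of_hasCompactSupport_real hf heven h
    (Complex.continuous_im.comp hG) (hGc.comp_left Complex.zero_im) ε
  simpa [Complex.re_add_im, mul_comm Complex.I] using
    (hre.clm_comp Complex.ofRealCLM).add (him.clm_comp (Complex.I • Complex.ofRealCLM))

end TestFunctions

section ParityAverages

open Topology

variable {n : ℕ}

/-- The `i`-th index of the class `Λ_n⁺`: the `2i - 1` of the paper, with indices from `0` on. -/
def evenIndex : Fin ((n + 1) / 2) → Fin n
  | ⟨i, hi⟩ => ⟨2 * i, by omega⟩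

/-- The `i`-th index of the parity class `Λ_n⁻`, the counterpart of `evenIndex`. -/
def oddIndex : Fin (n / 2) → Fin n
  | ⟨i, hi⟩ => ⟨2 * i + 1, by omega⟩

lemma sum_parityWeight_one_smul {E : Type*} [AddCommGroup E] [Module ℝ E] (a : Fin n → E) :
    ∑ i : Fin n, parityWeight 1 i • a i = ∑ i, a (evenIndex i) := by
  refine (Fintype.sum_of_injective evenIndex
    (fun i j hij => by simpa [evenIndex, Fin.ext_iff] using hij) _ _ (fun i hi => ?_)
    fun i => ?_).symm
  · have hodd : Odd (i : ℕ) := Nat.not_even_iff_odd.1 fun ⟨k, hk⟩ =>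
      hi ⟨⟨k, by omega⟩, Fin.ext (by simp only [evenIndex]; omega)⟩
    simp [parityWeight, hodd.neg_one_pow]
  · simp [parityWeight, evenIndex]

lemma sum_parityWeight_neg_one_smul {E : Type*} [AddCommGroup E] [Module ℝ E] (a : Fin n → E) :
    ∑ i : Fin n, parityWeight (-1) i • a i = ∑ i, a (oddIndex i) := by
  refine (Fintype.sum_of_injective oddIndex
    (fun i j hij => by simpa [oddIndex, Fin.ext_iff] using hij) _ _ (fun i hi => ?_)
    fun i => ?_).symm
  · have heven : Even (i : ℕ) := Nat.not_odd_iff_even.1 fun ⟨k, hk⟩ =>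
      hi ⟨⟨k, by omega⟩, Fin.ext (by simp only [oddIndex]; omega)⟩
    simp [parityWeight, heven.neg_one_pow]
  · norm_num [parityWeight, oddIndex, pow_succ]

lemma tendsto_average_parityWeight (ε : ℤˣ) :
    Tendsto (fun n : ℕ => (n : ℝ)⁻¹ * ∑ i : Fin n, parityWeight ε i) atTop (𝓝 2⁻¹) := by
  have halternating : Tendsto (fun n : ℕ => (n : ℝ)⁻¹ * ∑ i : Fin n, (-1 : ℝ) ^ (i : ℕ)) atTop
      (𝓝 0) := by
    refine squeeze_zero_norm (fun n => ?_) tendsto_inv_atTop_nhds_zero_nat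
    rw [Fin.sum_univ_eq_sum_range fun i => (-1 : ℝ) ^ i, neg_one_geom_sum]
    split_ifs <;> simp
  have hlim := (halternating.const_mul (((ε : ℤ) : ℝ) / 2)).const_add 2⁻¹
  rw [mul_zero, add_zero] at hlim
  refine hlim.congr' ?_
  filter_upwards [eventually_ne_atTop 0] with n hn
  have hsum := sum_parityWeight_mul ε fun _ : Fin n => (1 : ℝ)
  simp only [mul_one, Finset.sum_const, Finset.card_univ, Fintype.card_fin, nsmul_one] at hsum
  rw [hsum]
  field_simp

namespace HasParityLimit

variable {E : Type*} [NormedAddCommGroup E] [NormedSpace ℝ E] {f : ℝ → ℝ}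
  {lam : (n : ℕ) → Fin n → ℝ} {ε : ℤˣ} {G : ℝ → E}

lemma tendsto_average (h : HasParityLimit f lam ε G) :
    Tendsto (fun n : ℕ => (∑ i : Fin n, parityWeight ε i)⁻¹ •
      ∑ i : Fin n, parityWeight ε i • G (lam n i)) atTop (𝓝 (∫ x, G (f x) ∂circleMeasure)) := by
  have hlim := ((tendsto_average_parityWeight ε).inv₀ (by norm_num)).smul h.tendsto
  rw [inv_inv, smul_inv_smul₀ two_ne_zero] at hlim
  refine hlim.congr' ?_
  filter_upwards [eventually_ne_atTop 0] with n hn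
  rw [mul_inv, inv_inv, mul_comm, mul_smul, smul_inv_smul₀ (Nat.cast_ne_zero.2 hn)]

lemma tendsto_even_average (h : HasParityLimit f lam 1 G) :
    Tendsto (fun n : ℕ => (((n + 1) / 2 : ℕ) : ℝ)⁻¹ •
      ∑ i, G (lam n (evenIndex i))) atTop
      (𝓝 (∫ x, G (f x) ∂circleMeasure)) := by
  have hcard (n : ℕ) : ∑ i : Fin n, parityWeight 1 i = ((n + 1) / 2 : ℕ) := by
    simpa using sum_parityWeight_one_smul fun _ : Fin n => (1 : ℝ)
  simpa only [hcard, sum_parityWeight_one_smul] using h.tendsto_average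

lemma tendsto_odd_average (h : HasParityLimit f lam (-1) G) :
    Tendsto (fun n : ℕ => ((n / 2 : ℕ) : ℝ)⁻¹ •
      ∑ i, G (lam n (oddIndex i))) atTop
      (𝓝 (∫ x, G (f x) ∂circleMeasure)) := by
  have hcard (n : ℕ) : ∑ i : Fin n, parityWeight (-1) i = (n / 2 : ℕ) := by
    simpa using sum_parityWeight_neg_one_smul fun _ : Fin n => (1 : ℝ)
  simpa only [hcard, sum_parityWeight_neg_one_smul] using h.tendsto_average

end HasParityLimit

end ParityAverages

theorem stmt0_general
    (f : ℝ → ℝ)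
    (hf_int : IntegrableOn f (Set.Icc (-Real.pi) Real.pi))
    (hf_even : ∀ x, f (-x) = f x) :
    ∃ (V : (n : ℕ) → Matrix (Fin n) (Fin n) ℝ) (lamT lamH : (n : ℕ) → Fin n → ℝ),
      (∀ n : ℕ,
        V n * (V n)ᵀ = 1 ∧
        flipM n = V n * Matrix.diagonal (fun i : Fin n => ((-1 : ℝ)) ^ (i : ℕ)) * (V n)ᵀ ∧
        toeplitzR (fun x => (f x : ℂ)) n = V n * Matrix.diagonal (lamT n) * (V n)ᵀ ∧
        flipM n * toeplitzR (fun x => (f x : ℂ)) n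
          = V n * (Matrix.diagonal (fun i : Fin n => ((-1 : ℝ)) ^ (i : ℕ))
              * Matrix.diagonal (lamT n)) * (V n)ᵀ ∧
        (∀ i : Fin n, lamH n i = (-1 : ℝ) ^ (i : ℕ) * lamT n i)) ∧
      (∀ F : ℂ → ℂ, Continuous F → HasCompactSupport F →
        Tendsto (fun n : ℕ =>
            (∑ i, F ((lamT n (evenIndex i) : ℝ) : ℂ)) / (((n + 1) / 2 : ℕ) : ℂ))
          atTop (nhds ((∫ x in (-Real.pi)..Real.pi, F ((f x : ℝ) : ℂ)) / (2 * Real.pi)))) ∧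
      (∀ F : ℂ → ℂ, Continuous F → HasCompactSupport F →
        Tendsto (fun n : ℕ =>
            (∑ i, F ((-lamT n (oddIndex i) : ℝ) : ℂ)) / ((n / 2 : ℕ) : ℂ))
          atTop (nhds ((∫ x in (-Real.pi)..Real.pi, F ((-f x : ℝ) : ℂ)) / (2 * Real.pi)))) := by
  have hf : Integrable f circleMeasure :=
    integrable_circleMeasure_iff.2 (hf_int.mono_set Set.Ioc_subset_Icc_self)
  choose V lam h using exists_isFlipDiagonalization hf
  refine ⟨V, lam, fun n i => (-1) ^ (i : ℕ) * lam n i, fun n => ⟨(h n).mul_transpose, (h n).flip_eq,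
    (h n).toeplitz_eq, (h n).flip_mul_toeplitz_eq, fun _ => rfl⟩, fun F hF hFc => ?_,
    fun F hF hFc => ?_⟩
  · have hG := hFc.comp_isClosedEmbedding Complex.isometry_ofReal.isClosedEmbedding
    have hlim := hasParityLimit_of_hasCompactSupport hf hf_even h (by fun_prop) hG 1
    simpa [integral_circleMeasure, div_eq_inv_mul] using hlim.tendsto_even_average
  · have hG := hFc.comp_isClosedEmbedding
      (Complex.isometry_ofReal.isClosedEmbedding.comp (Homeomorph.neg ℝ).isClosedEmbedding)
    have hlim := hasParityLimit_of_hasCompactSupport hf hf_even h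
      (hF.comp (Complex.continuous_ofReal.comp continuous_neg)) hG (-1)
    simpa [integral_circleMeasure, div_eq_inv_mul] using hlim.tendsto_odd_average

/-- Let `f ∈ L¹([-π,π])` be real-valued and even, with
`ess inf_{[0,π]} f > -∞` or `ess sup_{[0,π]} f < ∞`.  Then for every `n` there are a real
unitary matrix `V_n` and orderings of the eigenvalues of `T_n(f)` and `H_n(f) = Y_n T_n(f)`
realizing simultaneous diagonalizations `Y_n = V_n Δ_n V_nᵀ`, `T_n(f) = V_n D_n V_nᵀ`,
`H_n(f) = V_n Δ_n D_n V_nᵀ`, with `λ_i(H_n) = (-1)^{i+1} λ_i(T_n)`, and the odd-indexed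
eigenvalues distribute as `f` while the negated even-indexed ones distribute as `-f`. -/
theorem stmt0
    (f : ℝ → ℝ)
    (hf_int : IntegrableOn f (Set.Icc (-Real.pi) Real.pi))
    (hf_even : ∀ x, f (-x) = f x)
    (hbdd : (⊥ : EReal) < sInf ((fun t : ℝ => (t : EReal)) '' essRangeR f (Set.Icc 0 Real.pi))
          ∨ sSup ((fun t : ℝ => (t : EReal)) '' essRangeR f (Set.Icc 0 Real.pi)) < (⊤ : EReal)) :
    ∃ (V : (n : ℕ) → Matrix (Fin n) (Fin n) ℝ) (lamT lamH : (n : ℕ) → Fin n → ℝ),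
      (∀ n : ℕ,
        V n * (V n)ᵀ = 1 ∧
        flipM n = V n * Matrix.diagonal (fun i : Fin n => ((-1 : ℝ)) ^ (i : ℕ)) * (V n)ᵀ ∧
        toeplitzR (fun x => (f x : ℂ)) n = V n * Matrix.diagonal (lamT n) * (V n)ᵀ ∧
        flipM n * toeplitzR (fun x => (f x : ℂ)) n
          = V n * (Matrix.diagonal (fun i : Fin n => ((-1 : ℝ)) ^ (i : ℕ))
              * Matrix.diagonal (lamT n)) * (V n)ᵀ ∧
        (∀ i : Fin n, lamH n i = (-1 : ℝ) ^ (i : ℕ) * lamT n i)) ∧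
      (∀ F : ℂ → ℂ, Continuous F → HasCompactSupport F →
        Tendsto (fun n : ℕ =>
            (∑ i : Fin ((n + 1) / 2),
              F ((lamT n ⟨2 * i.val, by have := i.isLt; omega⟩ : ℝ) : ℂ))
              / (((n + 1) / 2 : ℕ) : ℂ))
          atTop (nhds ((∫ x in (-Real.pi)..Real.pi, F ((f x : ℝ) : ℂ)) / (2 * Real.pi)))) ∧
      (∀ F : ℂ → ℂ, Continuous F → HasCompactSupport F →
        Tendsto (fun n : ℕ =>
            (∑ i : Fin (n / 2),
              F ((-lamT n ⟨2 * i.val + 1, by have := i.isLt; omega⟩ : ℝ) : ℂ))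
              / ((n / 2 : ℕ) : ℂ))
          atTop (nhds ((∫ x in (-Real.pi)..Real.pi, F ((-f x : ℝ) : ℂ)) / (2 * Real.pi)))) := by
  exact stmt0_general f hf_int hf_even
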